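/- arXiv:2309.03515 — 2 statements merged into one kernel-verified Lean document; each statement's English description precedes it below -/
import Mathlib

section
/- Let n ≥ 2, a ∈ 𝔹ⁿ \ {0}, c > 0, and a* = a/|a|². Then for all x, y ∈ 𝔹ⁿ \ {0}: log(1 + c·|x − y|/(|a|·√(|x|·|y|·|x − a*|·|y − a*|))) ≤ (2/(2 − |a|))·h_{𝔹ⁿ\{0},c}(x, y). -/
noncomputable section

open Real Filter

/-- The hyperbolic-type metric `h_{𝔹ⁿ,c}` on the unit ball. -/
def hB {n : ℕ} (c : ℝ) (x y : EuclideanSpace ℝ (Fin n)) : ℝ :=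
  Real.log (1 + c * ‖x - y‖ / Real.sqrt ((1 - ‖x‖) * (1 - ‖y‖)))

/-- The n-th (last) coordinate of a point of `ℝⁿ`. -/
def lastCoord {n : ℕ} (x : EuclideanSpace ℝ (Fin n)) : ℝ :=
  if h : 0 < n then x ⟨n - 1, Nat.sub_lt h one_pos⟩ else 0

/-- The hyperbolic-type metric `h_{ℍⁿ,c}` on the upper half space. -/
def hH {n : ℕ} (c : ℝ) (x y : EuclideanSpace ℝ (Fin n)) : ℝ :=
  Real.log (1 + c * ‖x - y‖ / Real.sqrt (lastCoord x * lastCoord y))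

/-- The hyperbolic-type metric `h_{𝔹ⁿ\{p},c}` on the punctured unit ball. -/
def hP {n : ℕ} (c : ℝ) (p x y : EuclideanSpace ℝ (Fin n)) : ℝ :=
  Real.log (1 + c * ‖x - y‖ /
    Real.sqrt (min ‖x - p‖ (1 - ‖x‖) * min ‖y - p‖ (1 - ‖y‖)))

/-- The inversion `σ_a` in the sphere `S^{n-1}(a*, r)`, `a* = a/|a|²`, `r² = 1/|a|² - 1`. -/
def sigmaInv {n : ℕ} (a x : EuclideanSpace ℝ (Fin n)) : EuclideanSpace ℝ (Fin n) :=
  (‖a‖ ^ 2)⁻¹ • a +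
    (((‖a‖ ^ 2)⁻¹ - 1) / ‖x - (‖a‖ ^ 2)⁻¹ • a‖ ^ 2) • (x - (‖a‖ ^ 2)⁻¹ • a)

/-- The last standard basis vector `eₙ` of `ℝⁿ`. -/
def eLast (n : ℕ) : EuclideanSpace ℝ (Fin n) :=
  if h : 0 < n then EuclideanSpace.single ⟨n - 1, Nat.sub_lt h one_pos⟩ 1 else 0

/-- The first standard basis vector `e₁` of `ℝⁿ`. -/
def eFirst (n : ℕ) : EuclideanSpace ℝ (Fin n) :=
  if h : 0 < n then EuclideanSpace.single ⟨0, h⟩ 1 else 0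

/-- The inversion `σ` in the sphere `S^{n-1}(-eₙ, √2)`, mapping `𝔹ⁿ` onto `ℍⁿ`. -/
def sigmaBH {n : ℕ} (x : EuclideanSpace ℝ (Fin n)) : EuclideanSpace ℝ (Fin n) :=
  -eLast n + (2 / ‖x + eLast n‖ ^ 2) • (x + eLast n)

lemma aux_min {t r X : ℝ} (ht0 : 0 < t) (ht1 : t < 1) (hr0 : 0 < r) (hr1 : r < 1)
    (hX : 1 - t * r ≤ t * X) : min r (1 - r) ≤ 2 / (2 - t) * (r * (t * X)) := by
  have h2 : 0 < 2 - t := by linarith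
  have h1 : r * (1 - t * r) ≤ r * (t * X) := mul_le_mul_of_nonneg_left hX hr0.le
  rw [div_mul_eq_mul_div, le_div_iff₀ h2]
  rcases le_total r (1 / 2) with h | h
  · have : min r (1 - r) ≤ r := min_le_left _ _
    nlinarith [mul_nonneg (mul_nonneg ht0.le hr0.le) (sub_nonneg.2 h)]
  · have : min r (1 - r) ≤ 1 - r := min_le_right _ _
    have h3 : (1 - r) * (2 - t) ≤ 2 * (r * (1 - t * r)) := by
      nlinarith [mul_nonneg (sub_nonneg.2 h) (sub_nonneg.2 hr1.le),
        mul_nonneg ht0.le (mul_nonneg (sub_nonneg.2 h) (sub_nonneg.2 hr1.le)),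
        mul_nonneg (sub_nonneg.2 h) (sub_nonneg.2 ht1.le)]
    nlinarith [mul_le_mul_of_nonneg_right this h2.le]

lemma aux_norm {n : ℕ} (a x : EuclideanSpace ℝ (Fin n)) (ht0 : 0 < ‖a‖) :
    1 - ‖a‖ * ‖x‖ ≤ ‖a‖ * ‖x - (‖a‖ ^ 2)⁻¹ • a‖ := by
  have h1 : ‖(‖a‖ ^ 2)⁻¹ • a‖ - ‖x‖ ≤ ‖x - (‖a‖ ^ 2)⁻¹ • a‖ := by
    rw [norm_sub_rev]; exact norm_sub_norm_le _ _
  have h2 : ‖a‖ * ‖(‖a‖ ^ 2)⁻¹ • a‖ = 1 := by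
    rw [norm_smul, norm_inv, norm_pow, norm_norm]
    field_simp
  nlinarith [mul_le_mul_of_nonneg_left h1 ht0.le]

theorem punctured_case_one_bound (n : ℕ) (hn : 2 ≤ n)
    (a : EuclideanSpace ℝ (Fin n)) (haB : ‖a‖ < 1) (ha0 : a ≠ 0)
    (c : ℝ) (hc : 0 < c)
    (x y : EuclideanSpace ℝ (Fin n))
    (hx : ‖x‖ < 1) (hx0 : x ≠ 0) (hy : ‖y‖ < 1) (hy0 : y ≠ 0) :
    Real.log (1 + c * ‖x - y‖ /
        (‖a‖ * Real.sqrt (‖x‖ * ‖y‖ * ‖x - (‖a‖ ^ 2)⁻¹ • a‖ * ‖y - (‖a‖ ^ 2)⁻¹ • a‖))) ≤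
      (2 / (2 - ‖a‖)) * hP c 0 x y := by
  have ht0 : 0 < ‖a‖ := norm_pos_iff.2 ha0
  have hr0 : 0 < ‖x‖ := norm_pos_iff.2 hx0
  have hs0 : 0 < ‖y‖ := norm_pos_iff.2 hy0
  have hX := aux_norm a x ht0
  have hY := aux_norm a y ht0
  have mX := aux_min ht0 haB hr0 hx hX
  have mY := aux_min ht0 haB hs0 hy hY
  unfold hP
  rw [sub_zero, sub_zero]
  set t := ‖a‖
  set r := ‖x‖
  set s := ‖y‖
  set X := ‖x - (t ^ 2)⁻¹ • a‖
  set Y := ‖y - (t ^ 2)⁻¹ • a‖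
  set d := ‖x - y‖
  have hd : 0 ≤ d := norm_nonneg _
  have hk : 1 ≤ 2 / (2 - t) := by rw [le_div_iff₀ (by linarith)]; linarith
  set k := 2 / (2 - t)
  have pX : 0 < X := pos_of_mul_pos_right (lt_of_lt_of_le (by nlinarith) hX) ht0.le
  have pY : 0 < Y := pos_of_mul_pos_right (lt_of_lt_of_le (by nlinarith) hY) ht0.le
  have m1 : 0 < min r (1 - r) := lt_min hr0 (by linarith)
  have m2 : 0 < min s (1 - s) := lt_min hs0 (by linarith)
  have hM : 0 < √(min r (1 - r) * min s (1 - s)) := Real.sqrt_pos.2 (mul_pos m1 m2)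
  have hD : 0 < t * √(r * s * X * Y) := by positivity
  have hk0 : 0 < k := by linarith
  have hMD : √(min r (1 - r) * min s (1 - s)) ≤ k * (t * √(r * s * X * Y)) := by
    apply Real.sqrt_le_iff.2
    refine ⟨by positivity, ?_⟩
    rw [mul_pow, mul_pow, Real.sq_sqrt (by positivity)]
    calc _ ≤ (k * (r * (t * X))) * (k * (s * (t * Y))) :=
          mul_le_mul mX mY m2.le (by positivity)
      _ = _ := by ring
  set M := √(min r (1 - r) * min s (1 - s))
  set D := t * √(r * s * X * Y)
  have hu : 0 ≤ c * d / M := by positivity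
  rw [← Real.log_rpow (by linarith)]
  apply Real.log_le_log (by positivity)
  refine le_trans ?_ (one_add_mul_self_le_rpow_one_add (by linarith) hk)
  have : c * d / D ≤ k * (c * d / M) := by
    rw [← mul_div_assoc, div_le_div_iff₀ hD hM]
    nlinarith [mul_le_mul_of_nonneg_left hMD (mul_nonneg hc.le hd)]
  linarith
end
end

section
/- Let n ≥ 2, a ∈ 𝔹ⁿ \ {0}, c > 0, and let σ_a be the inversion in the sphere S^{n−1}(a*, r). Then for all x, y ∈ 𝔹ⁿ \ {0}: log(1 + c·|σ_a(x) − σ_a(y)| / √((1 − |σ_a(x)|)(1 − |σ_a(y)|))) ≤ (1 + |a|) · h_{𝔹ⁿ\{0},c}(x, y). -/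
noncomputable section

open Real Filter

lemma aux_num (s u p D S : ℝ) (hs : 0 < s) (hs1 : s < 1) (hu : 0 ≤ u) (hu1 : u < 1)
    (hp : |p| ≤ s * u) (hD : D = 1 - 2 * p + s ^ 2 * u ^ 2) (hS : 0 ≤ S)
    (hSD : S ^ 2 * D = u ^ 2 - 2 * p + s ^ 2) :
    (1 - s) * (1 - u) ≤ D * (1 - S) := by
  obtain ⟨hp1, hp2⟩ := abs_le.mp hp
  have hq : 0 ≤ s * u := by positivity
  have hqs : s * u ≤ s := by nlinarith
  have hqu : s * u ≤ u := by nlinarith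
  have hD1 : (1 - s * u) ^ 2 ≤ D := by rw [hD]; nlinarith
  have hD2 : D ≤ (1 + s * u) ^ 2 := by rw [hD]; nlinarith
  have hDpos : 0 < D := lt_of_lt_of_le (by apply pow_pos; linarith) hD1
  have hk : 0 ≤ (1 - s) * (1 - u) := mul_nonneg (by linarith) (by linarith)
  have hkD : (1 - s) * (1 - u) ≤ D := by
    refine le_trans ?_ hD1
    rw [sq]
    apply mul_le_mul <;> linarith
  have key : 0 ≤ (1 - s) * (1 - u) + D * ((1 + s) * (1 + u) - 2) := by
    rcases le_total 2 ((1 + s) * (1 + u)) with h | h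
    · have := mul_nonneg hDpos.le (sub_nonneg.mpr h)
      linarith
    · have h1 := mul_le_mul_of_nonneg_right hD2 (sub_nonneg.mpr h)
      have h2 : 0 ≤ (1 - s) * (1 - u) + (1 + s * u) ^ 2 * ((1 + s) * (1 + u) - 2) := by
        have : (1 - s) * (1 - u) + (1 + s * u) ^ 2 * ((1 + s) * (1 + u) - 2)
          = (1 + s * u) * (s * u) ^ 2 + (s + u) * (2 * (s * u) + (s * u) ^ 2) := by ring
        rw [this]; positivity
      linarith
  have h3 : (D * S) ^ 2 ≤ (D - (1 - s) * (1 - u)) ^ 2 := by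
    have e1 : (D * S) ^ 2 = D * (D - (1 - s ^ 2) * (1 - u ^ 2)) := by
      have : (D * S) ^ 2 = D * (S ^ 2 * D) := by ring
      rw [this, hSD, hD]; ring
    have e2 := mul_nonneg hk key
    rw [e1]; nlinarith
  have h4 := (sq_le_sq₀ (by positivity) (by linarith)).mp h3
  linarith

lemma aux_point {n : ℕ} (a x : EuclideanSpace ℝ (Fin n)) (ha : ‖a‖ < 1) (ha0 : a ≠ 0)
    (hx : ‖x‖ < 1) :
    0 < ‖x - (‖a‖ ^ 2)⁻¹ • a‖ ∧
    ((‖a‖ ^ 2)⁻¹ - 1) * (1 - ‖x‖) ≤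
      (1 + ‖a‖) * ‖x - (‖a‖ ^ 2)⁻¹ • a‖ ^ 2 * (1 - ‖sigmaInv a x‖) := by
  have hs : 0 < ‖a‖ := norm_pos_iff.mpr ha0
  have hp : |inner ℝ x a| ≤ ‖a‖ * ‖x‖ := by
    have := abs_real_inner_le_norm x a
    linarith [mul_comm ‖a‖ ‖x‖]
  have hA : ‖x - (‖a‖ ^ 2)⁻¹ • a‖ ^ 2
      = (1 - 2 * inner ℝ x a + ‖a‖ ^ 2 * ‖x‖ ^ 2) / ‖a‖ ^ 2 := by
    rw [norm_sub_sq_real, inner_smul_right, norm_smul, norm_inv, norm_pow, norm_norm]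
    field_simp
    ring
  have hD : 0 < 1 - 2 * inner ℝ x a + ‖a‖ ^ 2 * ‖x‖ ^ 2 := by
    have h1 := (abs_le.mp hp).2
    have h2 : ‖a‖ * ‖x‖ < 1 := by nlinarith [norm_nonneg x]
    nlinarith [mul_pos (sub_pos.mpr h2) (sub_pos.mpr h2)]
  have hA0 : 0 < ‖x - (‖a‖ ^ 2)⁻¹ • a‖ := by
    apply lt_of_le_of_ne (norm_nonneg _)
    intro h
    rw [← h] at hA
    have : 0 < (1 - 2 * inner ℝ x a + ‖a‖ ^ 2 * ‖x‖ ^ 2) / ‖a‖ ^ 2 := by positivity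
    rw [← hA] at this
    norm_num at this
  refine ⟨hA0, ?_⟩
  have hS : ‖sigmaInv a x‖ ^ 2 * (1 - 2 * inner ℝ x a + ‖a‖ ^ 2 * ‖x‖ ^ 2)
      = ‖x‖ ^ 2 - 2 * inner ℝ x a + ‖a‖ ^ 2 := by
    unfold sigmaInv
    rw [norm_add_sq_real, norm_smul _ (x - _), mul_pow, Real.norm_eq_abs, sq_abs, hA,
      inner_smul_right, inner_sub_right, real_inner_self_eq_norm_sq, inner_smul_left,
      real_inner_comm, norm_smul, norm_inv, norm_pow, norm_norm]
    simp only [conj_trivial]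
    rw [real_inner_comm x a]
    have hD2 := hD.ne'
    generalize inner ℝ x a = p at *
    field_simp
    ring
  have := aux_num ‖a‖ ‖x‖ _ _ ‖sigmaInv a x‖ hs ha (norm_nonneg _) hx hp rfl (norm_nonneg _) hS
  rw [hA]
  have e1 : ((‖a‖ ^ 2)⁻¹ - 1) * (1 - ‖x‖)
      = (1 + ‖a‖) / ‖a‖ ^ 2 * ((1 - ‖a‖) * (1 - ‖x‖)) := by
    field_simp; ring
  have e2 : (1 + ‖a‖) * ((1 - 2 * inner ℝ x a + ‖a‖ ^ 2 * ‖x‖ ^ 2) / ‖a‖ ^ 2) *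
      (1 - ‖sigmaInv a x‖) = (1 + ‖a‖) / ‖a‖ ^ 2 *
      ((1 - 2 * inner ℝ x a + ‖a‖ ^ 2 * ‖x‖ ^ 2) * (1 - ‖sigmaInv a x‖)) := by
    ring
  rw [e1, e2]
  exact mul_le_mul_of_nonneg_left this (by positivity)

lemma aux_dist {n : ℕ} (a x y : EuclideanSpace ℝ (Fin n)) (hr : 0 ≤ (‖a‖ ^ 2)⁻¹ - 1)
    (hx : 0 < ‖x - (‖a‖ ^ 2)⁻¹ • a‖) (hy : 0 < ‖y - (‖a‖ ^ 2)⁻¹ • a‖) :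
    ‖sigmaInv a x - sigmaInv a y‖ = ((‖a‖ ^ 2)⁻¹ - 1) /
      (‖x - (‖a‖ ^ 2)⁻¹ • a‖ * ‖y - (‖a‖ ^ 2)⁻¹ • a‖) * ‖x - y‖ := by
  have h : ∀ z, sigmaInv a z =
      EuclideanGeometry.inversion ((‖a‖ ^ 2)⁻¹ • a) (Real.sqrt ((‖a‖ ^ 2)⁻¹ - 1)) z := by
    intro z
    rw [EuclideanGeometry.inversion, div_pow, Real.sq_sqrt hr, dist_eq_norm, sigmaInv,
      vsub_eq_sub, vadd_eq_add, add_comm]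
  have := EuclideanGeometry.dist_inversion_inversion
    (sub_ne_zero.mp (norm_pos_iff.mp hx)) (sub_ne_zero.mp (norm_pos_iff.mp hy))
    (Real.sqrt ((‖a‖ ^ 2)⁻¹ - 1))
  rw [Real.sq_sqrt hr, ← h, ← h] at this
  simpa only [dist_eq_norm] using this

lemma aux_final (s ρ A B X Y m k d c : ℝ) (hs : 0 < s) (hρ : 0 < ρ) (hA : 0 < A) (hB : 0 < B)
    (hm : 0 < m) (hk : 0 < k) (hd : 0 ≤ d) (hc : 0 < c)
    (hX : ρ * m ≤ (1 + s) * A ^ 2 * X) (hY : ρ * k ≤ (1 + s) * B ^ 2 * Y) :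
    Real.log (1 + c * (ρ / (A * B) * d) / Real.sqrt (X * Y)) ≤
      (1 + s) * Real.log (1 + c * d / Real.sqrt (m * k)) := by
  have hmk : 0 < Real.sqrt (m * k) := Real.sqrt_pos.mpr (by positivity)
  have h1 : ρ / ((1 + s) * (A * B)) * Real.sqrt (m * k) ≤ Real.sqrt (X * Y) := by
    apply Real.le_sqrt_of_sq_le
    rw [mul_pow, Real.sq_sqrt (by positivity), div_pow, div_mul_eq_mul_div,
      div_le_iff₀ (by positivity)]
    have := mul_le_mul hX hY (by positivity) (le_trans (by positivity) hX)
    linarith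
  have h2 : c * (ρ / (A * B) * d) / Real.sqrt (X * Y)
      ≤ (1 + s) * (c * d / Real.sqrt (m * k)) := by
    calc _ ≤ c * (ρ / (A * B) * d) / (ρ / ((1 + s) * (A * B)) * Real.sqrt (m * k)) := by
          gcongr
      _ = _ := by field_simp
  have ht : 0 ≤ c * d / Real.sqrt (m * k) := by positivity
  have h3 := one_add_mul_self_le_rpow_one_add (s := c * d / Real.sqrt (m * k)) (by linarith)
    (p := 1 + s) (by linarith)
  rw [← Real.log_rpow (by linarith)]
  apply Real.log_le_log
  · have : 0 ≤ c * (ρ / (A * B) * d) / Real.sqrt (X * Y) := by positivity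
    linarith
  · linarith

theorem punctured_case_four_bound (n : ℕ) (hn : 2 ≤ n)
    (a : EuclideanSpace ℝ (Fin n)) (haB : ‖a‖ < 1) (ha0 : a ≠ 0)
    (c : ℝ) (hc : 0 < c)
    (x y : EuclideanSpace ℝ (Fin n))
    (hx : ‖x‖ < 1) (hx0 : x ≠ 0) (hy : ‖y‖ < 1) (hy0 : y ≠ 0) :
    Real.log (1 + c * ‖sigmaInv a x - sigmaInv a y‖ /
        Real.sqrt ((1 - ‖sigmaInv a x‖) * (1 - ‖sigmaInv a y‖))) ≤
      (1 + ‖a‖) * hP c 0 x y := by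
  have hs : 0 < ‖a‖ := norm_pos_iff.mpr ha0
  have hr : 0 < (‖a‖ ^ 2)⁻¹ - 1 := by
    rw [sub_pos]
    exact (one_lt_inv₀ (by positivity)).mpr (by nlinarith)
  obtain ⟨hA, hX⟩ := aux_point a x haB ha0 hx
  obtain ⟨hB, hY⟩ := aux_point a y haB ha0 hy
  rw [aux_dist a x y hr.le hA hB, hP, sub_zero, sub_zero]
  refine aux_final _ _ _ _ _ _ _ _ _ c hs hr hA hB
    (lt_min (norm_pos_iff.mpr hx0) (by linarith)) (lt_min (norm_pos_iff.mpr hy0) (by linarith))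
    (norm_nonneg _) hc ?_ ?_
  · exact le_trans (mul_le_mul_of_nonneg_left (min_le_right _ _) hr.le) hX
  · exact le_trans (mul_le_mul_of_nonneg_left (min_le_right _ _) hr.le) hY
end
end
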